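/- Let p, q ≥ 1 and let f : ℝ^3 → ℍ^{p×q} be a matrix-valued function of three real variables x = (x_1,x_2,x_3) such that each of the four real components of each quaternionic entry of f is a rational function of x_1, x_2, x_3 (a quotient of real polynomials) whose denominator does not vanish at 0. Then there exist N ∈ ℕ, matrices D ∈ ℍ^{p×q}, C ∈ ℍ^{p×N}, A_1, A_2, A_3 ∈ ℍ^{N×N}, B_1, B_2, B_3 ∈ ℍ^{N×q}, and ε > 0 such that for every x ∈ ℝ^3 with ‖x‖ < ε: all denominators are nonzero at x, the matrix I_N − x_1A_1 − x_2A_2 − x_3A_3 is invertible in the ring of N×N quaternionic matrices, and f(x) = D + C (I_N − x_1A_1 − x_2A_2 − x_3A_3)^{−1} (x_1B_1 + x_2B_2 + x_3B_3). -/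

import Mathlib

open Filter Topology in
theorem aux_final {p q : ℕ} {κ : Type} [Fintype κ] [DecidableEq κ]
    (f : (Fin 3 → ℝ) → Matrix (Fin p) (Fin q) (Quaternion ℝ))
    (A : Fin 3 → Matrix κ κ ℝ) (B0 : Matrix κ (Fin q) ℝ)
    (C : Matrix (Fin p) κ (Quaternion ℝ))
    (V : (Fin 3 → ℝ) → Matrix κ (Fin q) ℝ)
    (R : (Fin 3 → ℝ) → Prop)
    (hR : ∀ᶠ x : EuclideanSpace ℝ (Fin 3) in 𝓝 0, R (fun k => x k))
    (hV : ∀ x, R x → (1 - ∑ k, x k • A k) * V x = B0)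
    (hfV : ∀ x, R x → f x = C * (V x).map (algebraMap ℝ (Quaternion ℝ))) :
    ∃ (N : ℕ) (D : Matrix (Fin p) (Fin q) (Quaternion ℝ))
      (C : Matrix (Fin p) (Fin N) (Quaternion ℝ))
      (A : Fin 3 → Matrix (Fin N) (Fin N) (Quaternion ℝ))
      (B : Fin 3 → Matrix (Fin N) (Fin q) (Quaternion ℝ))
      (ε : ℝ), 0 < ε ∧
      ∀ x : EuclideanSpace ℝ (Fin 3), ‖x‖ < ε →
        R (fun k => x k) ∧
        IsUnit ((1 : Matrix (Fin N) (Fin N) (Quaternion ℝ)) - ∑ k, x k • A k) ∧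
        f (fun k => x k) =
          D + C * Ring.inverse ((1 : Matrix (Fin N) (Fin N) (Quaternion ℝ)) - ∑ k, x k • A k) *
            (∑ k, x k • B k) := by
  classical
  have hdet : ∀ᶠ x : EuclideanSpace ℝ (Fin 3) in 𝓝 0, (1 - ∑ k, x k • A k).det ≠ 0 := by
    have hc : Continuous fun x : EuclideanSpace ℝ (Fin 3) => (1 - ∑ k, x k • A k).det := by
      apply Continuous.matrix_det
      fun_prop
    apply hc.continuousAt.eventually_ne
    simp
  obtain ⟨ε, hε, H⟩ := Metric.eventually_nhds_iff.1 (hR.and hdet)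
  let e := Fintype.equivFin κ
  let φ := (Algebra.ofId ℝ (Quaternion ℝ)).mapMatrix (m := Fin (Fintype.card κ))
  let A1 : Fin 3 → Matrix (Fin (Fintype.card κ)) (Fin (Fintype.card κ)) (Quaternion ℝ) :=
    fun k => φ ((A k).submatrix e.symm e.symm)
  let B1 : Matrix (Fin (Fintype.card κ)) (Fin q) (Quaternion ℝ) :=
    (B0.submatrix e.symm id).map (algebraMap ℝ (Quaternion ℝ))
  let C1 := C.submatrix id e.symm
  refine ⟨Fintype.card κ, C1 * B1, C1, A1, fun k => A1 k * B1, ε, hε, fun x hx => ?_⟩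
  obtain ⟨hRx, hdx⟩ := H (y := x) (by simpa using hx)
  have hG : (1 : Matrix (Fin (Fintype.card κ)) (Fin (Fintype.card κ)) (Quaternion ℝ))
      - ∑ k, x k • A1 k = φ ((1 - ∑ k, x k • A k).submatrix e.symm e.symm) := by
    have : (1 - ∑ k, x k • A k).submatrix e.symm e.symm
        = 1 - ∑ k, x k • (A k).submatrix e.symm e.symm := by
      ext i j
      simp [Matrix.sub_apply, Matrix.sum_apply, Matrix.one_apply]
    rw [this]
    simp [A1, map_sub, map_sum]
  have hU : IsUnit ((1 : Matrix (Fin (Fintype.card κ)) (Fin (Fintype.card κ)) (Quaternion ℝ))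
      - ∑ k, x k • A1 k) := by
    rw [hG]
    apply IsUnit.map
    rw [Matrix.isUnit_iff_isUnit_det, Matrix.det_submatrix_equiv_self]
    exact hdx.isUnit
  refine ⟨hRx, hU, ?_⟩
  set G := (1 : Matrix (Fin (Fintype.card κ)) (Fin (Fintype.card κ)) (Quaternion ℝ))
      - ∑ k, x k • A1 k with hGdef
  let V1 := ((V (fun k => x k)).submatrix e.symm id).map (algebraMap ℝ (Quaternion ℝ))
  have hGV : G * V1 = B1 := by
    rw [hG]
    have h1 := hV _ hRx
    simp only [B1, V1, ← h1]
    rw [← Matrix.submatrix_mul_equiv _ _ e.symm e.symm id, Matrix.map_mul]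
    rfl
  have hf1 : f (fun k => x k) = C1 * V1 := by
    rw [hfV _ hRx]
    simp only [C1, V1]
    rw [← Matrix.submatrix_map, Matrix.submatrix_mul_equiv]
    rfl
  have hsum : ∑ k, x k • (A1 k * B1) = (1 - G) * B1 := by
    simp [hGdef, Matrix.sum_mul]
  have hinv : Ring.inverse G * B1 = V1 := by
    rw [← hGV, ← Matrix.mul_assoc, Ring.inverse_mul_cancel _ hU, Matrix.one_mul]
  rw [hsum, hf1, Matrix.mul_assoc, ← Matrix.mul_assoc (Ring.inverse G), Matrix.mul_sub,
    Ring.inverse_mul_cancel _ hU, Matrix.mul_one, Matrix.sub_mul, hinv, Matrix.one_mul,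
    ← Matrix.mul_add]
  simp

/-- quaternion from its components -/
def mkQ (a b c d : ℝ) : Quaternion ℝ := ⟨a, b, c, d⟩

theorem mkQ_add (a b c d a' b' c' d' : ℝ) :
    mkQ a b c d + mkQ a' b' c' d' = mkQ (a + a') (b + b') (c + c') (d + d') := rfl

theorem mkQ_smul (r a b c d : ℝ) :
    r • mkQ a b c d = mkQ (r * a) (r * b) (r * c) (r * d) := rfl

/-- monomial value -/
noncomputable def monoVal (x : Fin 3 → ℝ) (m : Fin 3 →₀ ℕ) : ℝ := ∏ k, x k ^ m k

theorem eval_eq_sum_box (M : Fin 3 →₀ ℕ) (P : MvPolynomial (Fin 3) ℝ)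
    (hP : P.support ⊆ Finset.Iic M) (x : Fin 3 → ℝ) :
    MvPolynomial.eval x P = ∑ m : Finset.Iic M, P.coeff m * monoVal x m := by
  rw [MvPolynomial.eval_eq']
  rw [Finset.sum_coe_sort (Finset.Iic M) (fun m => P.coeff m * monoVal x m)]
  apply Finset.sum_subset hP
  intro m _ hm
  simp [MvPolynomial.notMem_support_iff.1 hm]

theorem aux_state (M : Fin 3 →₀ ℕ) (Q : MvPolynomial (Fin 3) ℝ)
    (hQ : Q.support ⊆ Finset.Iic M) (hQ0 : Q.coeff 0 = 1) :
    ∃ A : Fin 3 → Matrix (Finset.Iic M) (Finset.Iic M) ℝ, ∀ x : Fin 3 → ℝ,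
      (1 - ∑ k, x k • A k).mulVec (fun m : Finset.Iic M => monoVal x m) =
        fun m : Finset.Iic M => if (m : Fin 3 →₀ ℕ) = 0 then MvPolynomial.eval x Q else 0 := by
  classical
  have hpr : ∀ m : Finset.Iic M, ∃ kn : Fin 3 × Finset.Iic M, (m : Fin 3 →₀ ℕ) ≠ 0 →
      ∀ x : Fin 3 → ℝ, monoVal x m = x kn.1 * monoVal x kn.2 := by
    intro m
    by_cases hm : (m : Fin 3 →₀ ℕ) = 0
    · exact ⟨(0, m), fun h => absurd hm h⟩
    · obtain ⟨k, hk⟩ : ∃ k, (m : Fin 3 →₀ ℕ) k ≠ 0 := by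
        by_contra! h
        exact hm (Finsupp.ext h)
      refine ⟨(k, ⟨(m : Fin 3 →₀ ℕ) - Finsupp.single k 1, ?_⟩), fun _ x => ?_⟩
      · exact Finset.mem_Iic.2 (tsub_le_self.trans (Finset.mem_Iic.1 m.2))
      · have h2 : (m : Fin 3 →₀ ℕ) = ((m : Fin 3 →₀ ℕ) - Finsupp.single k 1) + Finsupp.single k 1 := by
          rw [tsub_add_cancel_of_le]
          rw [Finsupp.single_le_iff]
          omega
        have h3 : ∀ n : Fin 3 →₀ ℕ, monoVal x (n + Finsupp.single k 1) = x k * monoVal x n := by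
          intro n
          simp only [monoVal, Finsupp.add_apply, pow_add, Finset.prod_mul_distrib]
          rw [mul_comm]
          congr 1
          rw [Finset.prod_eq_single k]
          · simp
          · intro b _ hb
            simp [hb.symm]
          · simp
        rw [← h3, ← h2]
  choose pr hpr using hpr
  let E : Fin 3 → Matrix (Finset.Iic M) (Finset.Iic M) ℝ := fun k => Matrix.of fun j n =>
    if (j : Fin 3 →₀ ℕ) ≠ 0 ∧ pr j = (k, n) then 1 else 0
  let T : Matrix (Finset.Iic M) (Finset.Iic M) ℝ := Matrix.of fun i j =>
    (if i = j then 1 else 0) - (if (i : Fin 3 →₀ ℕ) = 0 then Q.coeff j else 0)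
  have hE : ∀ x : Fin 3 → ℝ, (∑ k, x k • E k).mulVec (fun m : Finset.Iic M => monoVal x m) =
      fun m : Finset.Iic M => if (m : Fin 3 →₀ ℕ) = 0 then 0 else monoVal x m := by
    intro x
    ext j
    simp only [Matrix.mulVec, dotProduct, Matrix.sum_apply, Matrix.smul_apply, E, smul_eq_mul, Matrix.of_apply]
    by_cases hj : (j : Fin 3 →₀ ℕ) = 0
    · simp [hj]
    · simp only [hj, ne_eq, not_false_eq_true, true_and, if_false]
      rw [hpr j hj x]
      rw [Finset.sum_eq_single (pr j).2]
      · rw [Finset.sum_eq_single (pr j).1]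
        · simp
        · intro b _ hb
          rw [if_neg (fun h => hb (by rw [h]))]; simp
        · simp
      · intro b _ hb
        apply mul_eq_zero_of_left
        apply Finset.sum_eq_zero
        intro k _
        rw [if_neg (fun h => hb (by rw [h]))]; simp
      · simp
  refine ⟨fun k => T * E k, fun x => ?_⟩
  have : ∑ k, x k • (T * E k) = T * ∑ k, x k • E k := by
    simp [Matrix.mul_sum]
  rw [this, Matrix.sub_mulVec, ← Matrix.mulVec_mulVec, hE, Matrix.one_mulVec]
  have hm0 : monoVal x 0 = 1 := by simp [monoVal]
  have hz : (0 : Fin 3 →₀ ℕ) ∈ Finset.Iic M := by simp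
  ext i
  simp only [Pi.sub_apply, Matrix.mulVec, dotProduct, T, Matrix.of_apply, sub_mul, Finset.sum_sub_distrib]
  have hd : ∀ g : Finset.Iic M → ℝ, ∑ j, (if i = j then (1 : ℝ) else 0) * g j = g i := by
    intro g
    simp only [ite_mul, one_mul, zero_mul, Finset.sum_ite_eq, Finset.mem_univ, if_true]
  rw [hd]
  by_cases hi : (i : Fin 3 →₀ ℕ) = 0
  · simp only [hi, if_true, hm0]
    rw [eval_eq_sum_box M Q hQ]
    have h1 : ∑ m : Finset.Iic M, Q.coeff m * monoVal x m =
      ∑ m : Finset.Iic M, Q.coeff m * (if (m : Fin 3 →₀ ℕ) = 0 then 0 else monoVal x m) + 1 := by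
      have h2 : ∀ m : Finset.Iic M, Q.coeff m * monoVal x m =
        Q.coeff m * (if (m : Fin 3 →₀ ℕ) = 0 then 0 else monoVal x m)
          + if m = ⟨0, hz⟩ then 1 else 0 := by
        intro m
        by_cases hm : (m : Fin 3 →₀ ℕ) = 0
        · simp [hm, Subtype.ext_iff, hQ0, hm0]
        · simp [hm, Subtype.ext_iff]
      rw [Finset.sum_congr rfl (fun m _ => h2 m), Finset.sum_add_distrib]
      simp
    rw [h1]
    ring
  · simp [hi]

/-- Realization of quaternionic-matrix-valued rational functions of three real variables
analytic at the origin: `f(x) = D + C (I − x₁A₁ − x₂A₂ − x₃A₃)⁻¹ (x₁B₁ + x₂B₂ + x₃B₃)`,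
where the inverse is taken in the ring of `N×N` quaternionic matrices. -/
theorem stmt3 (p q : ℕ) (hp : 1 ≤ p) (hq : 1 ≤ q)
    (f : (Fin 3 → ℝ) → Matrix (Fin p) (Fin q) (Quaternion ℝ))
    (P Q : Fin p → Fin q → Fin 4 → MvPolynomial (Fin 3) ℝ)
    (hQ0 : ∀ i l c, MvPolynomial.eval (0 : Fin 3 → ℝ) (Q i l c) ≠ 0)
    (hf : ∀ (x : Fin 3 → ℝ) (i : Fin p) (l : Fin q),
      f x i l =
        ⟨MvPolynomial.eval x (P i l 0) / MvPolynomial.eval x (Q i l 0),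
         MvPolynomial.eval x (P i l 1) / MvPolynomial.eval x (Q i l 1),
         MvPolynomial.eval x (P i l 2) / MvPolynomial.eval x (Q i l 2),
         MvPolynomial.eval x (P i l 3) / MvPolynomial.eval x (Q i l 3)⟩) :
    ∃ (N : ℕ) (D : Matrix (Fin p) (Fin q) (Quaternion ℝ))
      (C : Matrix (Fin p) (Fin N) (Quaternion ℝ))
      (A : Fin 3 → Matrix (Fin N) (Fin N) (Quaternion ℝ))
      (B : Fin 3 → Matrix (Fin N) (Fin q) (Quaternion ℝ))
      (ε : ℝ), 0 < ε ∧
      ∀ x : EuclideanSpace ℝ (Fin 3), ‖x‖ < ε →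
        (∀ i l c, MvPolynomial.eval (fun k => x k) (Q i l c) ≠ 0) ∧
        IsUnit ((1 : Matrix (Fin N) (Fin N) (Quaternion ℝ)) - ∑ k, x k • A k) ∧
        f (fun k => x k) =
          D + C * Ring.inverse ((1 : Matrix (Fin N) (Fin N) (Quaternion ℝ)) - ∑ k, x k • A k) *
            (∑ k, x k • B k) := by
  classical
  have hf' : ∀ (x : Fin 3 → ℝ) (i : Fin p) (l : Fin q), f x i l =
      mkQ (MvPolynomial.eval x (P i l 0) / MvPolynomial.eval x (Q i l 0))
        (MvPolynomial.eval x (P i l 1) / MvPolynomial.eval x (Q i l 1))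
        (MvPolynomial.eval x (P i l 2) / MvPolynomial.eval x (Q i l 2))
        (MvPolynomial.eval x (P i l 3) / MvPolynomial.eval x (Q i l 3)) := hf
  let Q1 : MvPolynomial (Fin 3) ℝ := ∏ t : Fin p × Fin q × Fin 4, Q t.1 t.2.1 t.2.2
  have hQ1 : MvPolynomial.eval (0 : Fin 3 → ℝ) Q1 ≠ 0 := by
    simp only [Q1, map_prod]
    exact Finset.prod_ne_zero_iff.2 fun t _ => hQ0 _ _ _
  let Q2 : MvPolynomial (Fin 3) ℝ := MvPolynomial.C (MvPolynomial.eval (0 : Fin 3 → ℝ) Q1)⁻¹ * Q1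
  have hQ2 : Q2.coeff 0 = 1 := by
    rw [← MvPolynomial.constantCoeff_eq, ← MvPolynomial.eval_zero]
    simp only [Q2, map_mul, MvPolynomial.eval_C]
    exact inv_mul_cancel₀ hQ1
  have hdvd : ∀ i l c, ∃ S, Q2 = Q i l c * S := by
    intro i l c
    have : Q i l c ∣ Q2 := Dvd.dvd.mul_left
      (Finset.dvd_prod_of_mem (fun t : Fin p × Fin q × Fin 4 => Q t.1 t.2.1 t.2.2)
        (Finset.mem_univ (i, l, c))) _
    exact this
  choose S hS using hdvd
  let P2 : Fin p → Fin q → Fin 4 → MvPolynomial (Fin 3) ℝ := fun i l c => P i l c * S i l c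
  let F : Finset (Fin 3 →₀ ℕ) := Q2.support ∪
    Finset.univ.biUnion (fun t : Fin p × Fin q × Fin 4 => (P2 t.1 t.2.1 t.2.2).support)
  let M : Fin 3 →₀ ℕ := F.sup id
  have hFM : F ⊆ Finset.Iic M := fun m hm => Finset.mem_Iic.2 (Finset.le_sup (f := id) hm)
  have hQM : Q2.support ⊆ Finset.Iic M := Finset.subset_union_left.trans hFM
  have hPM : ∀ i l c, (P2 i l c).support ⊆ Finset.Iic M := fun i l c =>
    ((Finset.subset_biUnion_of_mem
      (fun t : Fin p × Fin q × Fin 4 => (P2 t.1 t.2.1 t.2.2).support)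
      (Finset.mem_univ (i, l, c))).trans Finset.subset_union_right).trans hFM
  obtain ⟨A, hA⟩ := aux_state M Q2 hQM hQ2
  have hR : ∀ x : Fin 3 → ℝ, MvPolynomial.eval x Q2 ≠ 0 →
      ∀ i l c, MvPolynomial.eval x (Q i l c) ≠ 0 := by
    intro x hx i l c h
    apply hx
    rw [hS i l c, map_mul, h, zero_mul]
  have hquot : ∀ x : Fin 3 → ℝ, MvPolynomial.eval x Q2 ≠ 0 → ∀ i l c,
      MvPolynomial.eval x (P i l c) / MvPolynomial.eval x (Q i l c) =
        ∑ m : Finset.Iic M, (P2 i l c).coeff m * (monoVal x m / MvPolynomial.eval x Q2) := by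
    intro x hx i l c
    simp only [← mul_div_assoc]
    rw [← Finset.sum_div, ← eval_eq_sum_box M _ (hPM i l c), div_eq_div_iff (hR x hx i l c) hx]
    simp only [P2, map_mul]
    rw [hS i l c, map_mul]
    ring
  have key := aux_final (κ := Finset.Iic M × Fin q) f
    (fun k => Matrix.of fun a b => if a.2 = b.2 then A k a.1 b.1 else 0)
    (Matrix.of fun a l => if (a.1 : Fin 3 →₀ ℕ) = 0 ∧ a.2 = l then 1 else 0)
    (Matrix.of fun i a => mkQ ((P2 i a.2 0).coeff a.1) ((P2 i a.2 1).coeff a.1) ((P2 i a.2 2).coeff a.1)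
      ((P2 i a.2 3).coeff a.1))
    (fun x => Matrix.of fun a l => if a.2 = l then monoVal x a.1 / MvPolynomial.eval x Q2 else 0)
    (fun x => MvPolynomial.eval x Q2 ≠ 0) ?_ ?_ ?_
  · obtain ⟨N, D, C, A, B, ε, hε, H⟩ := key
    exact ⟨N, D, C, A, B, ε, hε, fun x hx => ⟨hR _ (H x hx).1, (H x hx).2⟩⟩
  · have hc : Continuous fun x : EuclideanSpace ℝ (Fin 3) =>
        MvPolynomial.eval (fun k => x k) Q2 :=
      (MvPolynomial.continuous_eval Q2).comp (by fun_prop)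
    apply hc.continuousAt.eventually_ne
    have : (fun k => (0 : EuclideanSpace ℝ (Fin 3)) k) = (0 : Fin 3 → ℝ) := rfl
    rw [this, MvPolynomial.eval_zero, MvPolynomial.constantCoeff_eq, hQ2]
    exact one_ne_zero
  · intro x hx
    ext ⟨m, l'⟩ l
    have h := congrFun (hA x) m
    simp only [Matrix.mulVec, dotProduct, Matrix.sub_apply, Matrix.sum_apply, Matrix.smul_apply,
      smul_eq_mul] at h
    simp only [Matrix.mul_apply, Fintype.sum_prod_type, Matrix.sub_apply, Matrix.sum_apply,
      Matrix.smul_apply, smul_eq_mul, Matrix.of_apply]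
    have h2 : ∀ n : Finset.Iic M, ∑ l'' : Fin q,
        ((1 : Matrix (Finset.Iic M × Fin q) (Finset.Iic M × Fin q) ℝ) (m, l') (n, l'')
          - ∑ k, x k * (if l' = l'' then A k m n else 0)) *
          (if l'' = l then monoVal x n / MvPolynomial.eval x Q2 else 0) =
        if l' = l then (((1 : Matrix (Finset.Iic M) (Finset.Iic M) ℝ) m n
          - ∑ k, x k * A k m n) * monoVal x n) / MvPolynomial.eval x Q2 else 0 := by
      intro n
      rw [Finset.sum_eq_single l]
      · by_cases hl : l' = l
        · simp [hl, Matrix.one_apply, mul_div_assoc]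
        · simp [hl, Matrix.one_apply]
      · intro b _ hb
        simp [hb]
      · simp
    rw [Finset.sum_congr rfl (fun n _ => h2 n)]
    by_cases hl : l' = l
    · simp only [hl, if_true, and_true]
      rw [← Finset.sum_div, h]
      split_ifs
      · exact div_self hx
      · simp
    · simp [hl]
  · intro x hx
    ext1 i l
    refine (hf' x i l).trans ?_
    rw [Matrix.mul_apply, Fintype.sum_prod_type]
    have h2 : ∀ m : Finset.Iic M, ∑ l' : Fin q,
        (mkQ ((P2 i l' 0).coeff m) ((P2 i l' 1).coeff m) ((P2 i l' 2).coeff m)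
          ((P2 i l' 3).coeff m) *
          (algebraMap ℝ (Quaternion ℝ)
            (if l' = l then monoVal x m / MvPolynomial.eval x Q2 else 0))) =
        (monoVal x m / MvPolynomial.eval x Q2) • mkQ ((P2 i l 0).coeff m) ((P2 i l 1).coeff m)
          ((P2 i l 2).coeff m) ((P2 i l 3).coeff m) := by
      intro m
      rw [Finset.sum_eq_single l]
      · rw [if_pos rfl, ← Algebra.commutes, ← Algebra.smul_def]
      · intro b _ hb
        simp [hb]
      · simp
    refine Eq.trans ?_ (Finset.sum_congr rfl (fun m _ => (h2 m).symm))
    rw [hquot x hx, hquot x hx, hquot x hx, hquot x hx]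
    have hsum : ∀ (s : Finset (Finset.Iic M)) (a b c d : Finset.Iic M → ℝ) (r : Finset.Iic M → ℝ),
        mkQ (∑ m ∈ s, a m * r m) (∑ m ∈ s, b m * r m) (∑ m ∈ s, c m * r m) (∑ m ∈ s, d m * r m)
          = ∑ m ∈ s, r m • mkQ (a m) (b m) (c m) (d m) := by
      intro s a b c d r
      induction s using Finset.induction_on with
      | empty => exact rfl
      | insert t s ht ih =>
        simp only [Finset.sum_insert ht]
        rw [← ih, mkQ_smul, mkQ_add]
        simp only [mul_comm]
    exact hsum _ _ _ _ _ _
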